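/- For every positive integer m and every integer n ≥ 2, the set C_m can be covered by at most (2m·log n + 8)^m · n^m closed intervals of length n^{−2m}, where log denotes the natural logarithm. -/

import Mathlib

open Set

/-- The value `g(a₁ ⋯ a_k) = 1/(a₁ + 1/(a₂ + ⋯ + 1/a_k))` of a finite continued fraction,
with `g(∅) = 0`. -/
noncomputable def cfVal : List ℕ → ℝ
  | [] => 0
  | a :: t => 1 / ((a : ℝ) + cfVal t)

/-- A word of positive integers whose last letter (if any) is at least `2`. -/
def isCFWord (a : List ℕ) : Prop := (∀ x ∈ a, 1 ≤ x) ∧ ∀ ℓ ∈ a.getLast?, 2 ≤ ℓ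

/-- `C_m`: the set of rationals in `(0,1)` whose continued fraction expansion
has length `m`. -/
def Cset (m : ℕ) : Set ℝ :=
  {x : ℝ | ∃ a : List ℕ, a.length = m ∧ isCFWord a ∧ x = cfVal a}

/-- `Ω` can be covered by at most `B` closed intervals of length `r`. -/
def CoveredBy (Ω : Set ℝ) (r B : ℝ) : Prop :=
  ∃ t : Finset ℝ, (t.card : ℝ) ≤ B ∧ Ω ⊆ ⋃ c ∈ t, Set.Icc c (c + r)

/-!
Fix a scale `R ≥ 1` and classify `x = 1 / (a + y) ∈ C_{m+1}` by its first letter `a`. If `a > R`,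
then `x ∈ [0, 1 / R]`, which needs at most `R + 1 ≤ 2 R` intervals of length `R⁻²`. If `a ≤ R`, then
`y ↦ 1 / (a + y)` contracts by `a⁻²`, so it suffices to cover `C_m` at the coarser scale `R / a`.
If `N_m R` denotes the number of intervals used for `C_m` at scale `R`, this gives
`N_{m+1} R ≤ 2 R + ∑_{a ≤ R} N_m (R / a)`, and the harmonic sum costs one factor `1 + log R` per
letter, whence `N_m R ≤ R (3 + log R) ^ m`. The theorem is the case `R = n ^ m`.
-/

open scoped NNReal

namespace CoveredBy

variable {Ω Ω' : Set ℝ} {r B B' : ℝ}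

theorem mono (h : CoveredBy Ω r B) (hΩ : Ω' ⊆ Ω) (hB : B ≤ B') : CoveredBy Ω' r B' := by
  obtain ⟨t, ht, hcover⟩ := h
  exact ⟨t, ht.trans hB, hΩ.trans hcover⟩

theorem union (h : CoveredBy Ω r B) (h' : CoveredBy Ω' r B') :
    CoveredBy (Ω ∪ Ω') r (B + B') := by
  obtain ⟨t, ht, hcover⟩ := h
  obtain ⟨t', ht', hcover'⟩ := h'
  refine ⟨t ∪ t', ?_, ?_⟩
  · calc ((t ∪ t').card : ℝ) ≤ t.card + t'.card := by exact_mod_cast Finset.card_union_le t t'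
      _ ≤ B + B' := add_le_add ht ht'
  · rw [Finset.set_biUnion_union]
    exact union_subset_union hcover hcover'

theorem biUnion {ι : Type*} {s : Finset ι} {Ω : ι → Set ℝ} {B : ι → ℝ}
    (h : ∀ i ∈ s, CoveredBy (Ω i) r (B i)) : CoveredBy (⋃ i ∈ s, Ω i) r (∑ i ∈ s, B i) := by
  classical
  induction s using Finset.induction_on with
  | empty => exact ⟨∅, by simp, by simp⟩
  | insert i s hi ih =>
    rw [Finset.set_biUnion_insert, Finset.sum_insert hi]
    exact (h i (Finset.mem_insert_self i s)).union
      (ih fun j hj => h j (Finset.mem_insert_of_mem hj))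

end CoveredBy

theorem coveredBy_Icc {a b r : ℝ} (hab : a ≤ b) (hr : 0 < r) :
    CoveredBy (Icc a b) r ((b - a) / r + 1) := by
  refine ⟨(Finset.range (⌊(b - a) / r⌋₊ + 1)).image fun j : ℕ => a + j * r, ?_, ?_⟩
  · have hcard : (((Finset.range (⌊(b - a) / r⌋₊ + 1)).image fun j : ℕ => a + j * r).card : ℝ) ≤
        ⌊(b - a) / r⌋₊ + 1 := by
      exact_mod_cast Finset.card_image_le.trans (Finset.card_range _).le
    have hfloor : (⌊(b - a) / r⌋₊ : ℝ) ≤ (b - a) / r :=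
      Nat.floor_le (div_nonneg (sub_nonneg.2 hab) hr.le)
    linarith
  · rintro x ⟨hax, hxb⟩
    have hlower := Nat.floor_le (div_nonneg (sub_nonneg.2 hax) hr.le)
    have hupper := (Nat.lt_floor_add_one ((x - a) / r)).le
    rw [le_div_iff₀ hr] at hlower
    rw [div_le_iff₀ hr] at hupper
    have hindex : ⌊(x - a) / r⌋₊ ∈ Finset.range (⌊(b - a) / r⌋₊ + 1) :=
      Finset.mem_range_succ_iff.2 (Nat.floor_le_floor (by gcongr))
    exact mem_biUnion (Finset.mem_image_of_mem _ hindex) ⟨by linarith, by linarith⟩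

theorem coveredBy_Icc_zero_one_div {R : ℝ} (hR : 1 ≤ R) :
    CoveredBy (Icc 0 (1 / R)) (R ^ 2)⁻¹ (2 * R) := by
  have : 0 < R := by linarith
  refine (coveredBy_Icc (by positivity) (by positivity)).mono Subset.rfl ?_
  calc (1 / R - 0) / (R ^ 2)⁻¹ + 1 = R + 1 := by field_simp; ring
    _ ≤ 2 * R := by linarith

theorem exists_image_subset_Icc_of_lipschitzOnWith {f : ℝ → ℝ} {s : Set ℝ} {K : ℝ≥0}
    (hf : LipschitzOnWith K f s) (c r : ℝ) :
    ∃ c', f '' (s ∩ Icc c (c + r)) ⊆ Icc c' (c' + K * r) := by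
  set t := s ∩ Icc c (c + r)
  have hdist : ∀ x ∈ t, ∀ y ∈ t, f y - K * r ≤ f x := by
    rintro x ⟨hx, hxc, hxr⟩ y ⟨hy, hyc, hyr⟩
    have hxy : |y - x| ≤ r := abs_le.2 ⟨by linarith, by linarith⟩
    have hfxy : f y - f x ≤ K * r :=
      calc f y - f x ≤ |f y - f x| := le_abs_self _
        _ ≤ K * |y - x| := hf.dist_le_mul y hy x hx
        _ ≤ K * r := by gcongr
    linarith
  refine ⟨sInf (f '' t), image_subset_iff.2 fun y hy => ⟨csInf_le ?_ (mem_image_of_mem f hy), ?_⟩⟩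
  · exact ⟨f y - K * r, forall_mem_image.2 fun x hx => hdist x hx y hy⟩
  · rw [← sub_le_iff_le_add]
    exact le_csInf ⟨f y, mem_image_of_mem f hy⟩ (forall_mem_image.2 fun x hx => hdist x hx y hy)

theorem CoveredBy.image_of_lipschitzOnWith {f : ℝ → ℝ} {Ω : Set ℝ} {r B : ℝ} {K : ℝ≥0}
    (h : CoveredBy Ω r B) (hf : LipschitzOnWith K f Ω) : CoveredBy (f '' Ω) (K * r) B := by
  obtain ⟨t, ht, hcover⟩ := h
  choose g hg using fun c => exists_image_subset_Icc_of_lipschitzOnWith hf c r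
  refine ⟨t.image g, le_trans (by exact_mod_cast Finset.card_image_le) ht, ?_⟩
  rintro _ ⟨y, hy, rfl⟩
  obtain ⟨c, hc, hyc⟩ := mem_iUnion₂.1 (hcover hy)
  exact mem_biUnion (Finset.mem_image_of_mem g hc) (hg c (mem_image_of_mem f ⟨hy, hyc⟩))

theorem lipschitzOnWith_one_div_add {a : ℝ≥0} (ha : 0 < a) :
    LipschitzOnWith (a ^ 2)⁻¹ (fun y : ℝ => 1 / (a + y)) (Ici 0) := by
  refine LipschitzOnWith.of_dist_le_mul fun x hx y hy => ?_
  have ha' : (0 : ℝ) < a := ha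
  rw [mem_Ici] at hx hy
  have hdiff : 1 / (a + x) - 1 / (a + y) = (y - x) / ((a + x) * (a + y)) := by
    field_simp
    ring
  calc dist (1 / (a + x)) (1 / (a + y)) = |x - y| / ((a + x) * (a + y)) := by
        rw [Real.dist_eq, hdiff, abs_div, abs_sub_comm y x,
          abs_of_pos (a := (a + x) * (a + y)) (by positivity)]
    _ ≤ |x - y| / (a * a) := by gcongr <;> linarith
    _ = ↑(a ^ 2)⁻¹ * dist x y := by
        rw [Real.dist_eq]
        push_cast
        ring

theorem cfVal_nonneg (a : List ℕ) : 0 ≤ cfVal a := by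
  induction a with
  | nil => exact le_rfl
  | cons a t ih =>
    rw [cfVal]
    positivity

theorem isCFWord.of_cons {a : ℕ} {w : List ℕ} (h : isCFWord (a :: w)) : isCFWord w :=
  ⟨fun x hx => h.1 x (List.mem_cons_of_mem a hx), fun ℓ hℓ => h.2 ℓ (List.mem_getLast?_cons hℓ)⟩

theorem Cset_subset_Ici (m : ℕ) : Cset m ⊆ Ici 0 := by
  rintro _ ⟨w, -, -, rfl⟩
  exact cfVal_nonneg w

theorem Cset_zero_subset : Cset 0 ⊆ {0} := by
  rintro _ ⟨w, hw, -, rfl⟩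
  rw [List.length_eq_zero_iff.1 hw]
  rfl

theorem Cset_succ_subset (m : ℕ) {R : ℝ} (hR : 0 < R) :
    Cset (m + 1) ⊆
      (⋃ a ∈ Finset.Icc 1 ⌊R⌋₊, (fun y : ℝ => 1 / (a + y)) '' Cset m) ∪ Icc 0 (1 / R) := by
  rintro _ ⟨_ | ⟨a, w⟩, hlength, hword, rfl⟩
  · simp at hlength
  have ha : 1 ≤ a := hword.1 a List.mem_cons_self
  have hw := cfVal_nonneg w
  by_cases haR : a ≤ ⌊R⌋₊
  · exact Or.inl (mem_biUnion (Finset.mem_Icc.2 ⟨ha, haR⟩)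
      ⟨cfVal w, ⟨w, Nat.succ.inj hlength, hword.of_cons, rfl⟩, rfl⟩)
  · have hRa : R < a := (Nat.floor_lt hR.le).1 (not_le.1 haR)
    exact Or.inr ⟨cfVal_nonneg (a :: w), one_div_le_one_div_of_le hR (by linarith)⟩

theorem CoveredBy.image_one_div_add {Ω : Set ℝ} {a R B : ℝ} (ha : 0 < a) (hΩ : Ω ⊆ Ici 0)
    (h : CoveredBy Ω ((R / a) ^ 2)⁻¹ B) :
    CoveredBy ((fun y : ℝ => 1 / (a + y)) '' Ω) (R ^ 2)⁻¹ B := by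
  lift a to ℝ≥0 using ha.le
  convert h.image_of_lipschitzOnWith ((lipschitzOnWith_one_div_add ha).mono hΩ) using 1
  push_cast
  rw [← mul_inv, ← mul_pow, mul_div_cancel₀ R ha.ne']

theorem sum_Icc_floor_inv_le_one_add_log {R : ℝ} (hR : 1 ≤ R) :
    ∑ a ∈ Finset.Icc 1 ⌊R⌋₊, (a : ℝ)⁻¹ ≤ 1 + Real.log R := by
  simpa [harmonic_eq_sum_Icc] using harmonic_floor_le_one_add_log R hR

theorem sum_Icc_floor_div_mul_add_log_pow_le (m : ℕ) {C R : ℝ} (hC : 0 ≤ C) (hR : 1 ≤ R) :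
    ∑ a ∈ Finset.Icc 1 ⌊R⌋₊, R / a * (C + Real.log (R / a)) ^ m ≤
      R * (C + Real.log R) ^ m * (1 + Real.log R) := by
  have hR0 : 0 < R := by linarith
  have hlog : 0 ≤ Real.log R := Real.log_nonneg hR
  calc ∑ a ∈ Finset.Icc 1 ⌊R⌋₊, R / a * (C + Real.log (R / a)) ^ m
      ≤ ∑ a ∈ Finset.Icc 1 ⌊R⌋₊, R * (C + Real.log R) ^ m * (a : ℝ)⁻¹ := by
        refine Finset.sum_le_sum fun a ha => ?_
        obtain ⟨h1a, haR⟩ := Finset.mem_Icc.1 ha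
        have h1a : (1 : ℝ) ≤ a := by exact_mod_cast h1a
        have haR : (a : ℝ) ≤ R := (Nat.le_floor_iff hR0.le).1 haR
        have hlog_div : 0 ≤ Real.log (R / a) := Real.log_nonneg ((one_le_div₀ (by linarith)).2 haR)
        calc R / a * (C + Real.log (R / a)) ^ m ≤ R / a * (C + Real.log R) ^ m := by
              gcongr
              exact div_le_self hR0.le h1a
          _ = R * (C + Real.log R) ^ m * (a : ℝ)⁻¹ := by ring
    _ = R * (C + Real.log R) ^ m * ∑ a ∈ Finset.Icc 1 ⌊R⌋₊, (a : ℝ)⁻¹ := (Finset.mul_sum ..).symm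
    _ ≤ R * (C + Real.log R) ^ m * (1 + Real.log R) := by
        gcongr
        exact sum_Icc_floor_inv_le_one_add_log hR

theorem cf_covering_Cm_general (m : ℕ) {R : ℝ} (hR : 1 ≤ R) :
    CoveredBy (Cset m) (R ^ 2)⁻¹ (R * (3 + Real.log R) ^ m) := by
  induction m generalizing R with
  | zero =>
    have hpoint : CoveredBy {0} (R ^ 2)⁻¹ 1 := by
      simpa using coveredBy_Icc (le_refl (0 : ℝ)) (show 0 < (R ^ 2)⁻¹ by positivity)
    exact hpoint.mono Cset_zero_subset (by simpa using hR)
  | succ m ih =>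
    have hR0 : 0 < R := by linarith
    have hlog : 0 ≤ Real.log R := Real.log_nonneg hR
    have hsmall : ∀ a ∈ Finset.Icc 1 ⌊R⌋₊, CoveredBy ((fun y : ℝ => 1 / (a + y)) '' Cset m)
        (R ^ 2)⁻¹ (R / a * (3 + Real.log (R / a)) ^ m) := by
      intro a ha
      obtain ⟨h1a, haR⟩ := Finset.mem_Icc.1 ha
      have ha0 : (0 : ℝ) < a := by exact_mod_cast h1a
      have hRa : 1 ≤ R / a := (one_le_div₀ ha0).2 ((Nat.le_floor_iff hR0.le).1 haR)
      exact (ih hRa).image_one_div_add ha0 (Cset_subset_Ici m)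
    refine ((CoveredBy.biUnion hsmall).union (coveredBy_Icc_zero_one_div hR)).mono
      (Cset_succ_subset m hR0) ?_
    have hone : 1 ≤ (3 + Real.log R) ^ m := one_le_pow₀ (by linarith)
    calc _ ≤ R * (3 + Real.log R) ^ m * (1 + Real.log R) + 2 * R * (3 + Real.log R) ^ m :=
          add_le_add (sum_Icc_floor_div_mul_add_log_pow_le m zero_le_three hR)
            (le_mul_of_one_le_right (by positivity) hone)
      _ = R * (3 + Real.log R) ^ (m + 1) := by ring

/-- For `m ≥ 1` and `n ≥ 2`, the set `C_m` can be covered by at most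
`(2m·log n + 8)^m · n^m` closed intervals of length `n^{-2m}`. -/
theorem cf_covering_Cm (m n : ℕ) (hm : 0 < m) (hn : 2 ≤ n) :
    CoveredBy (Cset m) (((n : ℝ) ^ (2 * m))⁻¹)
      ((2 * (m : ℝ) * Real.log n + 8) ^ m * (n : ℝ) ^ m) := by
  have hn1 : (1 : ℝ) ≤ n := by exact_mod_cast one_le_two.trans hn
  have hcover := cf_covering_Cm_general m (one_le_pow₀ hn1 : 1 ≤ (n : ℝ) ^ m)
  rw [← pow_mul, mul_comm m 2, Real.log_pow, mul_comm ((n : ℝ) ^ m)] at hcover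
  have hlog : 0 ≤ (m : ℝ) * Real.log n := by positivity
  exact hcover.mono Subset.rfl (by gcongr ?_ ^ m * _; linarith)
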